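/- Neither of the functions x ↦ (h₁(x))²·e^{−x²}/(1+2x²)² and x ↦ (h₂(x))²·e^{−x²}/(1+2x²)² is Lebesgue integrable on ℝ, where h₁(x) = 4x + √π·e^{x²}·(1−2x²)·(1−erf(x)) and h₂(x) = 2 + 4x² + 4√π·x·e^{x²}·(1−erf(x)). -/

import Mathlib

/-- The error function. -/
noncomputable def erf (x : ℝ) : ℝ :=
  (2 / Real.sqrt Real.pi) * ∫ t in (0 : ℝ)..x, Real.exp (-t ^ 2)

/-- The non-polynomial solution Ĥ₁. -/
noncomputable def h1 (x : ℝ) : ℝ :=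
  4 * x + Real.sqrt Real.pi * Real.exp (x ^ 2) * (1 - 2 * x ^ 2) * (1 - erf x)

/-- The non-polynomial solution Ĥ₂. -/
noncomputable def h2 (x : ℝ) : ℝ :=
  2 + 4 * x ^ 2 + 4 * Real.sqrt Real.pi * x * Real.exp (x ^ 2) * (1 - erf x)

/-!
As `x → -∞` the factor `1 - erf x` stays above `1`, so both functions grow in absolute value at
least like `exp (x ^ 2)`. Squaring beats the Gaussian weight: on a half-line the integrands are at
least `exp (x ^ 2) / (1 + 2 * x ^ 2) ^ 2`, which is bounded below by `1 / 16`.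
-/

open MeasureTheory Set

theorem not_integrable_of_forall_mem_le {α : Type*} [MeasurableSpace α] {μ : Measure α}
    {f : α → ℝ} {s : Set α} {c : ℝ} (hs : μ s = ⊤) (hc : 0 < c) (hf : ∀ x ∈ s, c ≤ f x) :
    ¬ Integrable f μ := fun hint =>
  (measure_mono_top hf hs).not_lt (hint.measure_ge_lt_top hc)

theorem one_add_two_mul_sq_sq_le_sixteen_mul_exp_sq (x : ℝ) :
    (1 + 2 * x ^ 2) ^ 2 ≤ 16 * Real.exp (x ^ 2) := by
  have hhalf : 1 + 2 * x ^ 2 ≤ 4 * Real.exp (x ^ 2 / 2) := by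
    linarith [Real.add_one_le_exp (x ^ 2 / 2)]
  calc (1 + 2 * x ^ 2) ^ 2 ≤ (4 * Real.exp (x ^ 2 / 2)) ^ 2 := by gcongr
    _ = 16 * Real.exp (x ^ 2) := by
      rw [mul_pow, ← Real.exp_nat_mul]
      ring_nf

theorem one_div_sixteen_le_sq_mul_exp_neg_sq_div {x y : ℝ} (hy : Real.exp (x ^ 2) ≤ |y|) :
    1 / 16 ≤ y ^ 2 * Real.exp (-x ^ 2) / (1 + 2 * x ^ 2) ^ 2 := by
  rw [le_div_iff₀ (by positivity)]
  calc 1 / 16 * (1 + 2 * x ^ 2) ^ 2 ≤ Real.exp (x ^ 2) := by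
        linarith [one_add_two_mul_sq_sq_le_sixteen_mul_exp_sq x]
    _ = Real.exp (x ^ 2) ^ 2 * Real.exp (-x ^ 2) := by
        rw [← Real.exp_nat_mul, ← Real.exp_add]
        ring_nf
    _ ≤ |y| ^ 2 * Real.exp (-x ^ 2) := by gcongr
    _ = y ^ 2 * Real.exp (-x ^ 2) := by rw [sq_abs]

theorem not_integrable_sq_mul_exp_neg_sq_div {h : ℝ → ℝ} {s : Set ℝ} (hs : volume s = ⊤)
    (hh : ∀ x ∈ s, Real.exp (x ^ 2) ≤ |h x|) :
    ¬ Integrable (fun x : ℝ => (h x) ^ 2 * Real.exp (-x ^ 2) / (1 + 2 * x ^ 2) ^ 2) :=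
  not_integrable_of_forall_mem_le hs (by norm_num) fun x hx =>
    one_div_sixteen_le_sq_mul_exp_neg_sq_div (hh x hx)

theorem erf_nonpos {x : ℝ} (hx : x ≤ 0) : erf x ≤ 0 := by
  have hint : 0 ≤ ∫ t in x..(0 : ℝ), Real.exp (-t ^ 2) :=
    intervalIntegral.integral_nonneg hx fun t _ => (Real.exp_pos _).le
  rw [erf, intervalIntegral.integral_symm, mul_neg, neg_nonpos]
  positivity

/-- The scaled complementary error function `exp (x ^ 2) * erfc x`, the transcendental part that
`h1` and `h2` have in common. -/
noncomputable def erfcx (x : ℝ) : ℝ :=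
  Real.exp (x ^ 2) * (1 - erf x)

theorem h1_eq_erfcx (x : ℝ) :
    h1 x = 4 * x + (1 - 2 * x ^ 2) * (Real.sqrt Real.pi * erfcx x) := by
  rw [h1, erfcx]
  ring

theorem h2_eq_erfcx (x : ℝ) :
    h2 x = 2 + 4 * x ^ 2 + 4 * x * (Real.sqrt Real.pi * erfcx x) := by
  rw [h2, erfcx]
  ring

theorem exp_sq_le_sqrt_pi_mul_erfcx {x : ℝ} (hx : x ≤ 0) :
    Real.exp (x ^ 2) ≤ Real.sqrt Real.pi * erfcx x := by
  have hpi : 1 ≤ Real.sqrt Real.pi := Real.one_le_sqrt.2 (by linarith [Real.pi_gt_three])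
  have herfcx : Real.exp (x ^ 2) ≤ erfcx x :=
    le_mul_of_one_le_right (Real.exp_pos _).le (by linarith [erf_nonpos hx])
  exact herfcx.trans (le_mul_of_one_le_left ((Real.exp_pos _).le.trans herfcx) hpi)

theorem exp_sq_le_abs_h1 {x : ℝ} (hx : x ≤ -1) : Real.exp (x ^ 2) ≤ |h1 x| := by
  have hcoeff : 1 ≤ 2 * x ^ 2 - 1 := by nlinarith
  have hexp := exp_sq_le_sqrt_pi_mul_erfcx (x := x) (by linarith)
  calc Real.exp (x ^ 2) ≤ Real.sqrt Real.pi * erfcx x := hexp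
    _ ≤ (2 * x ^ 2 - 1) * (Real.sqrt Real.pi * erfcx x) :=
        le_mul_of_one_le_left ((Real.exp_pos _).le.trans hexp) hcoeff
    _ ≤ -h1 x := by
        rw [h1_eq_erfcx]
        linarith
    _ ≤ |h1 x| := neg_le_abs _

theorem exp_sq_le_abs_h2 {x : ℝ} (hx : x ≤ -2) : Real.exp (x ^ 2) ≤ |h2 x| := by
  have hpoly : 2 + 4 * x ^ 2 ≤ 4 * Real.exp (x ^ 2) := by
    linarith [Real.add_one_le_exp (x ^ 2)]
  have hexp : 8 * Real.exp (x ^ 2) ≤ -(4 * x) * (Real.sqrt Real.pi * erfcx x) :=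
    mul_le_mul (by linarith) (exp_sq_le_sqrt_pi_mul_erfcx (by linarith)) (Real.exp_pos _).le
      (by linarith)
  calc Real.exp (x ^ 2) ≤ 8 * Real.exp (x ^ 2) - 4 * Real.exp (x ^ 2) := by
        linarith [Real.exp_pos (x ^ 2)]
    _ ≤ -h2 x := by
        rw [h2_eq_erfcx]
        linarith
    _ ≤ |h2 x| := neg_le_abs _

theorem stmt5 :
    ¬ MeasureTheory.Integrable
        (fun x : ℝ => (h1 x) ^ 2 * Real.exp (-x ^ 2) / (1 + 2 * x ^ 2) ^ 2) ∧
    ¬ MeasureTheory.Integrable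
        (fun x : ℝ => (h2 x) ^ 2 * Real.exp (-x ^ 2) / (1 + 2 * x ^ 2) ^ 2) := by
  constructor
  · exact not_integrable_sq_mul_exp_neg_sq_div (s := Iic (-1)) Real.volume_Iic
      fun _ => exp_sq_le_abs_h1
  · exact not_integrable_sq_mul_exp_neg_sq_div (s := Iic (-2)) Real.volume_Iic
      fun _ => exp_sq_le_abs_h2
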